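/- arXiv:2603.16582 — 4 statements merged into one kernel-verified Lean document; each statement's English description precedes it below -/
import Mathlib

section
/- Let B be the open unit ball of ℂⁿ equipped with an arbitrary norm, and let 𝓗^∞_s(B, ℂⁿ) = { F = (F₁,…,Fₙ) ∈ 𝓗^∞(B, ℂⁿ) : ∂F_j/∂z_k(z) = ∂F_k/∂z_j(z) for all z ∈ B and all j,k }, where (ℂⁿ)* is identified with ℂⁿ (carrying the dual norm) via F ↦ (w ↦ Σ_j F_j w_j). Then the mapping Φ : 𝓗𝓛₀(B) → 𝓗^∞_s(B, ℂⁿ) given by Φ(g) = dg is a surjective isometry: every F ∈ 𝓗^∞_s(B, ℂⁿ) equals dg for a unique g ∈ 𝓗𝓛₀(B), and L(g) = sup_{z∈B} ‖dg(z)‖ for every g ∈ 𝓗𝓛₀(B). -/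
theorem aux_diff {E : Type*} [NormedAddCommGroup E] [NormedSpace ℂ E] [FiniteDimensional ℂ E]
    (g : E → ℂ) (U : Set E) (hU : IsOpen U) (hg : DifferentiableOn ℂ g U) (K : NNReal)
    (hK : LipschitzOnWith K g U) (v z₀ : E) (hz : z₀ ∈ U) :
    DifferentiableAt ℂ (fun z => fderiv ℂ g z v) z₀ := by
  obtain ⟨ε', hε', hball⟩ := Metric.isOpen_iff.1 hU z₀ hz
  obtain ⟨ε, hε, hεε⟩ : ∃ ε : ℝ, 0 < ε ∧ ε + ε = ε' := ⟨ε' / 2, by positivity, by ring⟩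
  set r : ℝ := ε / (‖v‖ + 1) with hr
  have hr0 : 0 < r := by positivity
  have hrv : r * ‖v‖ < ε := by
    rw [hr, div_mul_eq_mul_div, div_lt_iff₀ (by positivity)]
    nlinarith
  have hmem : ∀ x ∈ Metric.ball z₀ ε, ∀ ζ : ℂ, ‖ζ‖ ≤ r → x + ζ • v ∈ U := by
    intro x hx ζ hζ
    apply hball
    rw [mem_ball_iff_norm] at hx ⊢
    have h1 : ‖ζ • v‖ ≤ r * ‖v‖ := by rw [norm_smul]; gcongr
    have h2 : x + ζ • v - z₀ = (x - z₀) + ζ • v := by abel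
    rw [h2]
    have := norm_add_le (x - z₀) (ζ • v)
    linarith
  set c : ℝ → ℂ := fun t => deriv (circleMap 0 r) t * (1 / (circleMap 0 r t - 0) ^ 2) with hc
  have hcc : Continuous c := by
    simp only [hc, deriv_circleMap]
    refine Continuous.mul (by fun_prop) (Continuous.div (by fun_prop) (by fun_prop) ?_)
    intro t
    have : circleMap 0 r t ≠ 0 := circleMap_ne_center hr0.ne'
    simpa using this
  have hnorm : ∀ t, ‖circleMap 0 r t‖ ≤ r := by
    intro t; simp [abs_of_pos hr0]
  have hformula : ∀ x ∈ Metric.ball z₀ ε, fderiv ℂ g x v =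
      (2 * Real.pi * Complex.I)⁻¹ * ∫ t in (0:ℝ)..(2 * Real.pi), c t * g (x + circleMap 0 r t • v) := by
    intro x hx
    have hd : DifferentiableOn ℂ (fun ζ : ℂ => g (x + ζ • v)) (Metric.closedBall 0 r) := by
      apply hg.comp (by fun_prop)
      intro ζ hζ
      exact hmem x hx ζ (by simpa using hζ)
    have h := hd.deriv_eq_smul_circleIntegral hr0
    have hx0 : x ∈ U := by simpa using hmem x hx 0 (by simpa using hr0.le)
    have hder : deriv (fun ζ : ℂ => g (x + ζ • v)) 0 = fderiv ℂ g x v := by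
      have h1 : HasFDerivAt g (fderiv ℂ g x) (x + (0:ℂ) • v) := by
        simpa using (hg.differentiableAt (hU.mem_nhds hx0)).hasFDerivAt
      have h2 : HasDerivAt (fun ζ : ℂ => x + ζ • v) v 0 := by
        simpa using ((hasDerivAt_id (0:ℂ)).smul_const v).const_add x
      exact (h1.comp_hasDerivAt (0:ℂ) h2).deriv
    rw [hder] at h
    have h3 : (∮ z in C(0, r), (1 / (z - 0) ^ 2) • g (x + z • v)) =
        ∫ t in (0:ℝ)..(2 * Real.pi), c t * g (x + circleMap 0 r t • v) := by
      simp only [circleIntegral, hc, smul_eq_mul, mul_assoc]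
    rw [← h3, h, smul_eq_mul, inv_mul_cancel_left₀]
    exact Complex.two_pi_I_ne_zero
  have hcont : ∀ x ∈ Metric.ball z₀ ε, Continuous (fun t => c t * g (x + circleMap 0 r t • v)) := by
    intro x hx
    refine hcc.mul ?_
    exact hg.continuousOn.comp_continuous (by fun_prop) (fun t => hmem x hx _ (hnorm t))
  have hnb : Metric.ball z₀ ε ∈ nhds z₀ := Metric.ball_mem_nhds _ hε
  have key := intervalIntegral.hasFDerivAt_integral_of_dominated_loc_of_lip (𝕜 := ℂ)
    (μ := MeasureTheory.volume) (a := (0:ℝ)) (b := 2 * Real.pi)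
    (F := fun x t => c t * g (x + circleMap 0 r t • v))
    (F' := fun t => c t • fderiv ℂ g (z₀ + circleMap 0 r t • v))
    (bound := fun t => ‖c t‖ * K) (x₀ := z₀) hnb
    (Filter.eventually_of_mem hnb fun x hx => (hcont x hx).aestronglyMeasurable)
    ((hcont z₀ (Metric.mem_ball_self hε)).intervalIntegrable _ _)
    (by
      borelize E
      have : FiniteDimensional ℂ (E →L[ℂ] ℂ) := inferInstance
      have : ProperSpace E := FiniteDimensional.proper ℂ E
      have : ProperSpace (E →L[ℂ] ℂ) := FiniteDimensional.proper ℂ _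
      borelize (E →L[ℂ] ℂ)
      have hm : Measurable (fun t => fderiv ℂ g (z₀ + circleMap 0 r t • v)) :=
        (measurable_fderiv ℂ g).comp (Continuous.measurable (by fun_prop))
      exact (hcc.aestronglyMeasurable).smul hm.aestronglyMeasurable)
    (Filter.Eventually.of_forall fun t _ => by
      refine LipschitzOnWith.of_dist_le_mul fun x hx y hy => ?_
      have h1 := hK.dist_le_mul _ (hmem x hx _ (hnorm t)) _ (hmem y hy _ (hnorm t))
      rw [dist_add_right, dist_eq_norm] at h1
      rw [dist_eq_norm, ← mul_sub, norm_mul]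
      have : ((Real.nnabs (‖c t‖ * K) : NNReal) : ℝ) = ‖c t‖ * K := by
        simp
      rw [this, mul_assoc]
      gcongr)
    (Continuous.intervalIntegrable (by fun_prop) _ _)
    (Filter.Eventually.of_forall fun t _ => by
      have h1 : HasFDerivAt g (fderiv ℂ g (z₀ + circleMap 0 r t • v)) (z₀ + circleMap 0 r t • v) :=
        (hg.differentiableAt (hU.mem_nhds
          (hmem z₀ (Metric.mem_ball_self hε) _ (hnorm t)))).hasFDerivAt
      exact (h1.comp z₀ ((hasFDerivAt_id z₀).add_const (circleMap 0 r t • v))).const_mul (c t))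
  have := (key.2.differentiableAt).const_mul ((2 * Real.pi * Complex.I)⁻¹)
  exact this.congr_of_eventuallyEq (Filter.eventually_of_mem hnb hformula)


/-- Let `B` be the open unit ball of `ℂⁿ` with an arbitrary norm (formalized as
a complex normed space `E` together with a linear identification `e : E ≃ₗ[ℂ] ℂⁿ`).  With the
dual `(ℂⁿ)* = E*` identified with `ℂⁿ` via `F ↦ (w ↦ ∑ j, F j * w j)`, the map
`Φ : 𝓗𝓛₀(B) → 𝓗^∞_s(B, ℂⁿ)`, `Φ g = dg`, is a surjective isometry: `Φ` maps into `𝓗^∞_s`,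
`L(g) = sup_{z ∈ B} ‖dg(z)‖`, and every `F ∈ 𝓗^∞_s(B, ℂⁿ)` equals `dg` for a unique
`g ∈ 𝓗𝓛₀(B)`. -/
theorem stmt2 (n : ℕ) (E : Type*) [NormedAddCommGroup E] [NormedSpace ℂ E]
    (e : E ≃ₗ[ℂ] (Fin n → ℂ)) :
    let B := Metric.ball (0 : E) 1
    let b : Fin n → E := fun j => e.symm (Pi.single j 1)
    let HL0 : (E → ℂ) → Prop := fun g =>
      DifferentiableOn ℂ g B ∧ g 0 = 0 ∧ ∃ K : NNReal, LipschitzOnWith K g B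
    let Hs : (E → Fin n → ℂ) → Prop := fun F =>
      DifferentiableOn ℂ F B ∧
      (∃ C : ℝ, ∀ z ∈ B, ∀ v : E, ‖v‖ ≤ 1 → ‖∑ j : Fin n, F z j * (e v) j‖ ≤ C) ∧
      (∀ z ∈ B, ∀ j k : Fin n,
        fderiv ℂ (fun w => F w j) z (b k) = fderiv ℂ (fun w => F w k) z (b j))
    (∀ g : E → ℂ, HL0 g → Hs (fun z j => fderiv ℂ g z (b j))) ∧
    (∀ g : E → ℂ, HL0 g →
      sInf {K : ℝ | 0 ≤ K ∧ ∀ x ∈ B, ∀ y ∈ B, ‖g x - g y‖ ≤ K * ‖x - y‖} =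
        sSup {r : ℝ | ∃ z ∈ B, r = ‖fderiv ℂ g z‖}) ∧
    (∀ F : E → Fin n → ℂ, Hs F →
      ∃ g : E → ℂ,
        (HL0 g ∧ ∀ z ∈ B, ∀ v : E, fderiv ℂ g z v = ∑ j : Fin n, F z j * (e v) j) ∧
        ∀ g' : E → ℂ,
          (HL0 g' ∧ ∀ z ∈ B, ∀ v : E, fderiv ℂ g' z v = ∑ j : Fin n, F z j * (e v) j) →
          ∀ z ∈ B, g' z = g z) := by
  intro B b HL0 Hs
  have hfin : FiniteDimensional ℂ E := LinearEquiv.finiteDimensional e.symm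
  have hBo : IsOpen B := Metric.isOpen_ball
  have hBc : Convex ℝ B := convex_ball 0 1
  have h0B : (0 : E) ∈ B := Metric.mem_ball_self one_pos
  -- coordinate functionals
  let p : Fin n → E →L[ℂ] ℂ := fun j =>
    LinearMap.toContinuousLinearMap ((LinearMap.proj j).comp e.toLinearMap)
  have hp : ∀ j v, p j v = e v j := fun j v => rfl
  have hexp : ∀ v : E, v = ∑ j, e v j • b j := by
    intro v
    apply e.injective
    rw [map_sum]
    ext i
    simp [b, Pi.single_apply]
  have hlin : ∀ (l : E →L[ℂ] ℂ) (v : E), ∑ j, l (b j) * e v j = l v := by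
    intro l v
    conv_rhs => rw [hexp v]
    rw [map_sum]
    refine Finset.sum_congr rfl fun j _ => ?_
    rw [map_smul, smul_eq_mul, mul_comm]
  have hlin' : ∀ (l : E →L[ℂ] ℂ), ∑ j, l (b j) • p j = l := by
    intro l
    ext v
    simp [hp, hlin]
  refine ⟨?_, ?_, ?_⟩
  · rintro g ⟨hg, hg0, K, hK⟩
    have hd : ∀ v, ∀ z ∈ B, DifferentiableAt ℂ (fun z => fderiv ℂ g z v) z :=
      fun v z hz => aux_diff g B hBo hg K hK v z hz
    refine ⟨?_, ⟨K, ?_⟩, ?_⟩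
    · rw [differentiableOn_pi]
      intro j z hz
      exact (hd (b j) z hz).differentiableWithinAt
    · intro z hz v hv
      change ‖∑ j, fderiv ℂ g z (b j) * e v j‖ ≤ K
      rw [hlin]
      have h1 := norm_fderiv_le_of_lipschitzOn ℂ (hBo.mem_nhds hz) hK
      calc _ ≤ ‖fderiv ℂ g z‖ * ‖v‖ := ContinuousLinearMap.le_opNorm _ _
        _ ≤ K * 1 := by gcongr
        _ = K := mul_one _
    · intro z hz j k
      have hD : DifferentiableAt ℂ (fderiv ℂ g) z := by
        have h1 : DifferentiableAt ℂ (fun z => ∑ j, fderiv ℂ g z (b j) • p j) z :=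
          DifferentiableAt.fun_sum fun j _ => (hd (b j) z hz).smul_const (p j)
        have h2 : (fun z => ∑ j, fderiv ℂ g z (b j) • p j) = fderiv ℂ g :=
          funext fun z => hlin' _
        rwa [h2] at h1
      have hs := second_derivative_symmetric_of_eventually (𝕜 := ℂ) (f := g) (f' := fderiv ℂ g)
        (Filter.eventually_of_mem (hBo.mem_nhds hz) fun y hy =>
          (hg.differentiableAt (hBo.mem_nhds hy)).hasFDerivAt) hD.hasFDerivAt (b k) (b j)
      have hv : ∀ v w, fderiv ℂ (fun w => fderiv ℂ g w v) z w = fderiv ℂ (fderiv ℂ g) z w v := by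
        intro v w
        rw [(hD.hasFDerivAt.clm_apply (hasFDerivAt_const v z)).fderiv]
        simp
      change fderiv ℂ (fun w => fderiv ℂ g w (b j)) z (b k) =
        fderiv ℂ (fun w => fderiv ℂ g w (b k)) z (b j)
      rw [hv, hv, hs]
  · rintro g ⟨hg, hg0, K, hK⟩
    have hub : ∀ C : ℝ, 0 ≤ C → (∀ x ∈ B, ∀ y ∈ B, ‖g x - g y‖ ≤ C * ‖x - y‖) →
        ∀ z ∈ B, ‖fderiv ℂ g z‖ ≤ C := by
      intro C hC h z hz
      exact norm_fderiv_le_of_lip' ℂ hC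
        (Filter.eventually_of_mem (hBo.mem_nhds hz) fun x hx => h x hx z hz)
    have hKm : ∀ x ∈ B, ∀ y ∈ B, ‖g x - g y‖ ≤ (K:ℝ) * ‖x - y‖ := by
      intro x hx y hy
      simpa [dist_eq_norm] using hK.dist_le_mul x hx y hy
    have hbdd : BddAbove {r : ℝ | ∃ z ∈ B, r = ‖fderiv ℂ g z‖} := by
      refine ⟨K, ?_⟩
      rintro r ⟨z, hz, rfl⟩
      exact hub K K.2 hKm z hz
    apply le_antisymm
    · refine csInf_le ⟨0, fun K hK => hK.1⟩ ⟨?_, ?_⟩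
      · exact (norm_nonneg _).trans (le_csSup hbdd ⟨0, h0B, rfl⟩)
      · intro x hx y hy
        exact hBc.norm_image_sub_le_of_norm_fderiv_le (𝕜 := ℂ)
          (fun z hz => hg.differentiableAt (hBo.mem_nhds hz))
          (fun z hz => le_csSup hbdd ⟨z, hz, rfl⟩) hy hx
    · refine le_csInf ⟨K, K.2, hKm⟩ ?_
      rintro C ⟨hC, h⟩
      refine csSup_le ⟨_, 0, h0B, rfl⟩ ?_
      rintro r ⟨z, hz, rfl⟩
      exact hub C hC h z hz
  · rintro F ⟨hF, ⟨C, hC⟩, hsym⟩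
    let ω : E → E →L[ℂ] ℂ := fun z => ∑ j, F z j • p j
    have hω : ∀ z v, ω z v = ∑ j, F z j * e v j := by
      intro z v
      simp [ω, hp]
    have hFj : ∀ z ∈ B, ∀ j, DifferentiableAt ℂ (fun w => F w j) z := fun z hz j =>
      differentiableAt_pi.1 (hF.differentiableAt (hBo.mem_nhds hz)) j
    have hωd : ∀ z ∈ B, HasFDerivAt ω
        (∑ j, (fderiv ℂ (fun w => F w j) z).smulRight (p j)) z := fun z hz =>
      HasFDerivAt.fun_sum fun j _ => (hFj z hz j).hasFDerivAt.smul_const (p j)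
    obtain ⟨f, hf⟩ := hBc.exists_forall_hasFDerivAt_of_fderiv_symmetric (ω := ω) hBo
      (fun z hz => ((hωd z hz).restrictScalars ℝ).differentiableAt.differentiableWithinAt)
      (by
        intro z hz x y
        rw [((hωd z hz).restrictScalars ℝ).fderiv]
        have hx : ∀ x y : E, (∑ j, (fderiv ℂ (fun w => F w j) z).smulRight (p j)) x y =
            ∑ j, ∑ k, fderiv ℂ (fun w => F w j) z (b k) * e x k * e y j := by
          intro x y
          simp only [_root_.sum_apply, ContinuousLinearMap.smulRight_apply,
            _root_.smul_apply, hp, smul_eq_mul]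
          refine Finset.sum_congr rfl fun j _ => ?_
          rw [← hlin _ x, Finset.sum_mul]
        change (∑ j, (fderiv ℂ (fun w => F w j) z).smulRight (p j)) x y =
          (∑ j, (fderiv ℂ (fun w => F w j) z).smulRight (p j)) y x
        rw [hx, hx, Finset.sum_comm]
        refine Finset.sum_congr rfl fun j _ => Finset.sum_congr rfl fun k _ => ?_
        rw [hsym z hz k j]
        ring)
    have hf' : ∀ z ∈ B, HasFDerivAt (fun z => f z - f 0) (ω z) z := fun z hz =>
      (hf z hz).sub_const _
    have hgd : DifferentiableOn ℂ (fun z => f z - f 0) B := fun z hz =>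
      (hf' z hz).differentiableAt.differentiableWithinAt
    refine ⟨fun z => f z - f 0, ⟨⟨hgd, sub_self _, ?_⟩, ?_⟩, ?_⟩
    · have hC0 : 0 ≤ C := (norm_nonneg _).trans (hC 0 h0B 0 (by simp))
      refine ⟨⟨C, hC0⟩, ?_⟩
      refine hBc.lipschitzOnWith_of_nnnorm_hasFDerivWithin_le (𝕜 := ℂ)
        (fun z hz => (hf' z hz).hasFDerivWithinAt) ?_
      intro z hz
      change ‖ω z‖ ≤ C
      refine ContinuousLinearMap.opNorm_le_of_unit_norm hC0 ?_
      intro v hv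
      rw [hω]
      exact hC z hz v hv.le
    · intro z hz v
      rw [(hf' z hz).fderiv, hω]
    · rintro g' ⟨⟨hg', hg'0, -⟩, hd'⟩
      refine hBo.eqOn_of_fderiv_eq (𝕜 := ℂ) hBc.isPreconnected hg' hgd ?_ h0B (by simp [hg'0])
      intro z hz
      ext v
      rw [hd' z hz, (hf' z hz).fderiv, hω]
end

section
/- Let X be a complex Banach space with open unit ball B_X. The mapping Φ : 𝓗𝓛₀(B_X) → 𝓗^∞_s(B_X, X*) given by Φ(f) = df is a surjective isometry: for every f ∈ 𝓗𝓛₀(B_X) the differential df belongs to 𝓗^∞_s(B_X, X*) with L(f) = sup_{x∈B_X} ‖df(x)‖, and for every g ∈ 𝓗^∞_s(B_X, X*) there exists f ∈ 𝓗𝓛₀(B_X) with df = g. -/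
open Metric Filter Topology Set

section aux
variable {X : Type*} [NormedAddCommGroup X] [NormedSpace ℂ X]

theorem aux_S {f : X → ℂ} {c : X} {R M : ℝ} (hR : 0 < R)
    (hd : DifferentiableOn ℂ f (ball c R)) (hM : ∀ z ∈ ball c R, ‖f z‖ ≤ M) :
    ‖fderiv ℂ f c‖ ≤ 2 * M / R := by
  refine Complex.norm_fderiv_le_div_of_mapsTo_ball hd (fun z hz => ?_) hR
  rw [mem_closedBall, dist_eq_norm]
  have := norm_sub_le (f z) (f c)
  have := hM z hz
  have := hM c (mem_ball_self hR)
  linarith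

theorem aux_T {f : X → ℂ} {c h : X} {R M : ℝ} (hR : 0 < R)
    (hd : DifferentiableOn ℂ f (ball c R)) (hM : ∀ z ∈ ball c R, ‖f z‖ ≤ M) (hh : ‖h‖ < R) :
    ‖f (c + h) - f c - fderiv ℂ f c h‖ ≤ 4 * M * (‖h‖ / R) ^ 2 := by
  have hS := aux_S hR hd hM
  have hfc : DifferentiableAt ℂ f c := hd.differentiableAt (ball_mem_nhds c hR)
  have key := Complex.dist_le_mul_div_pow_of_mapsTo_ball_of_isLittleO
    (f := fun w => f w - fderiv ℂ f c (w - c)) (c := c) (z := c + h) (R₁ := R) (R₂ := 4 * M)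
    (n := 1) ?_ ?_ ?_ ?_
  · simpa [dist_eq_norm, sub_right_comm] using key
  · exact hd.sub (by fun_prop)
  · intro z hz
    rw [mem_closedBall, dist_eq_norm]
    have h1 := hM z hz
    have h2 := hM c (mem_ball_self hR)
    have hz' : ‖z - c‖ < R := by simpa [dist_eq_norm] using hz
    have h3 : ‖fderiv ℂ f c (z - c)‖ ≤ 2 * M := by
      calc _ ≤ ‖fderiv ℂ f c‖ * ‖z - c‖ := ContinuousLinearMap.le_opNorm _ _
        _ ≤ 2 * M / R * R := by
          have := (norm_nonneg _).trans hS
          gcongr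
        _ = 2 * M := by field_simp
    have h4 := norm_sub_le (f z - fderiv ℂ f c (z - c)) (f c)
    have h5 := norm_sub_le (f z) (fderiv ℂ f c (z - c))
    simp only [sub_self, map_zero, sub_zero]
    linarith
  · have := hfc.hasFDerivAt.isLittleO
    simp only [pow_one, sub_self, map_zero, sub_zero]
    refine this.norm_right.congr_left fun w => by ring
  · simpa [dist_eq_norm] using hh

theorem aux_phi0 {f : X → ℂ} {c v : X} {R M : ℝ} (hR : 0 < R)
    (hd : DifferentiableOn ℂ f (ball c (2 * R))) (hM : ∀ z ∈ ball c (2 * R), ‖f z‖ ≤ M)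
    (hv : ‖v‖ < R) :
    DifferentiableAt ℂ (fun z => fderiv ℂ f z v) c := by
  have hM0 : 0 ≤ M := (norm_nonneg _).trans (hM c (mem_ball_self (by positivity)))
  let t : ℕ → ℂ := fun n => ((1 / ((n : ℝ) + 1) : ℝ) : ℂ)
  have htn : ∀ n, ‖t n‖ = 1 / ((n : ℝ) + 1) := fun n => by
    simp only [t, Complex.norm_real, Real.norm_eq_abs]
    exact abs_of_pos (by positivity)
  have ht0 : ∀ n, t n ≠ 0 := fun n => by
    rw [← norm_pos_iff, htn]; positivity
  have ht1 : ∀ n, ‖t n‖ ≤ 1 := fun n => by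
    rw [htn]; rw [div_le_one (by positivity)]; linarith [(Nat.cast_nonneg n : (0:ℝ) ≤ n)]
  have htv : ∀ n, ‖t n • v‖ < R := fun n => by
    rw [norm_smul]
    exact (mul_le_of_le_one_left (norm_nonneg _) (ht1 n)).trans_lt hv
  have hsub : ∀ z ∈ ball c R, ball z R ⊆ ball c (2 * R) := fun z hz => by
    apply ball_subset_ball'
    have := mem_ball.1 hz
    linarith
  have hmem : ∀ n, ∀ z ∈ ball c R, z + t n • v ∈ ball c (2 * R) := fun n z hz =>
    hsub z hz (by simpa [dist_eq_norm] using htv n)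
  have hfd : ∀ z ∈ ball c (2 * R), HasFDerivAt f (fderiv ℂ f z) z := fun z hz =>
    (hd.differentiableAt (isOpen_ball.mem_nhds hz)).hasFDerivAt
  let q : ℕ → X → ℂ := fun n z => (t n)⁻¹ • (f (z + t n • v) - f z)
  let q' : ℕ → X → X →L[ℂ] ℂ := fun n z => (t n)⁻¹ • (fderiv ℂ f (z + t n • v) - fderiv ℂ f z)
  have hq : ∀ n, ∀ z ∈ ball c R, HasFDerivAt (q n) (q' n z) z := by
    intro n z hz
    have h1 : HasFDerivAt (fun w => f (w + t n • v)) (fderiv ℂ f (z + t n • v)) z :=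
      (hasFDerivAt_comp_add_right (t n • v)).2 (hfd _ (hmem n z hz))
    exact (h1.sub (hfd z (hsub z hz (mem_ball_self hR)))).const_smul (t n)⁻¹
  have hqb : ∀ n, ∀ z ∈ ball c R, ‖q n z - fderiv ℂ f z v‖ ≤ 4 * M * (1 / ((n : ℝ) + 1)) := by
    intro n z hz
    have h1 := aux_T hR (hd.mono (hsub z hz)) (fun w hw => hM w (hsub z hz hw)) (htv n)
    have h2 : q n z - fderiv ℂ f z v
        = (t n)⁻¹ • (f (z + t n • v) - f z - fderiv ℂ f z (t n • v)) := by
      simp only [q, map_smul, smul_sub, inv_smul_smul₀ (ht0 n)]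
    rw [h2, norm_smul, norm_inv]
    have h3 : (‖t n • v‖ / R) ^ 2 ≤ ‖t n‖ ^ 2 := by
      rw [norm_smul, mul_div_assoc]
      have : ‖v‖ / R ≤ 1 := (div_le_one hR).2 hv.le
      have h0 : 0 ≤ ‖v‖ / R := by positivity
      gcongr
      exact mul_le_of_le_one_right (norm_nonneg _) this
    have h4 : 0 < ‖t n‖ := norm_pos_iff.2 (ht0 n)
    rw [← htn n]
    calc _ ≤ ‖t n‖⁻¹ * (4 * M * ‖t n‖ ^ 2) := by gcongr; exact h1.trans (by gcongr)
      _ = _ := by field_simp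
  have hcs : UniformCauchySeqOn q' atTop (ball c (R / 2)) := by
    rw [Metric.uniformCauchySeqOn_iff]
    intro ε hε
    obtain ⟨N, hN⟩ := exists_nat_gt (64 * M / R / ε)
    refine ⟨N, fun m hm n hn z hz => ?_⟩
    have hz' : z ∈ ball c R := ball_subset_ball (by linarith) hz
    have hsub2 : ball z (R / 2) ⊆ ball c R := by
      apply ball_subset_ball'
      have := mem_ball.1 hz
      linarith
    have hD : HasFDerivAt (fun w => q m w - q n w) (q' m z - q' n z) z :=
      (hq m z hz').sub (hq n z hz')
    rw [dist_eq_norm, ← hD.fderiv]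
    have hb : ∀ k, N ≤ k → 1 / ((k : ℝ) + 1) ≤ 1 / ((N : ℝ) + 1) := fun k hk => by
      have : (N : ℝ) ≤ k := by exact_mod_cast hk
      gcongr
    have := aux_S (f := fun w => q m w - q n w) (c := z) (R := R / 2)
      (M := 8 * M * (1 / ((N : ℝ) + 1))) (by positivity)
      (fun w hw => ((hq m w (hsub2 hw)).sub
        (hq n w (hsub2 hw))).differentiableAt.differentiableWithinAt)
      (fun w hw => by
        have h1 := hqb m w (hsub2 hw)
        have h2 := hqb n w (hsub2 hw)
        have h3 : 4 * M * (1 / ((m : ℝ) + 1)) ≤ 4 * M * (1 / ((N : ℝ) + 1)) := by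
          gcongr
        have h4 : 4 * M * (1 / ((n : ℝ) + 1)) ≤ 4 * M * (1 / ((N : ℝ) + 1)) := by
          gcongr
        have h5 := norm_sub_le (q m w - fderiv ℂ f w v) (q n w - fderiv ℂ f w v)
        rw [sub_sub_sub_cancel_right] at h5
        linarith)
    refine this.trans_lt ?_
    have hN' : 64 * M / R < ε * ((N : ℝ) + 1) := by
      rw [div_lt_iff₀ hε] at hN
      nlinarith
    have h7 : 2 * (8 * M * (1 / ((N : ℝ) + 1))) / (R / 2) = (32 * M / R) / ((N : ℝ) + 1) := by
      field_simp; ring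
    rw [h7, div_lt_iff₀ (by positivity)]
    have : 32 * M / R ≤ 64 * M / R := by gcongr; norm_num
    linarith
  have hlim : ∀ z, ∃ L : X →L[ℂ] ℂ, z ∈ ball c (R / 2) → Tendsto (fun n => q' n z) atTop (𝓝 L) := by
    intro z
    by_cases hz : z ∈ ball c (R / 2)
    · obtain ⟨L, hL⟩ := cauchySeq_tendsto_of_complete (hcs.cauchySeq hz)
      exact ⟨L, fun _ => hL⟩
    · exact ⟨0, fun h => absurd h hz⟩
  choose g' hg' using hlim
  have hunif := hcs.tendstoUniformlyOn_of_tendsto (fun z hz => hg' z hz)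
  refine (hasFDerivAt_of_tendstoUniformlyOn isOpen_ball hunif
    (fun n z hz => hq n z (ball_subset_ball (by linarith) hz)) (g := fun z => fderiv ℂ f z v)
    (fun z hz => ?_) (mem_ball_self (by positivity : 0 < R / 2))).differentiableAt
  rw [tendsto_iff_norm_sub_tendsto_zero]
  refine squeeze_zero (fun _ => norm_nonneg _)
    (fun n => hqb n z (ball_subset_ball (by linarith) hz)) ?_
  simpa using (tendsto_one_div_add_atTop_nhds_zero_nat (𝕜 := ℝ)).const_mul (4 * M)

theorem aux_phi {f : X → ℂ} {c : X} {R M : ℝ} (hR : 0 < R)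
    (hd : DifferentiableOn ℂ f (ball c R)) (hM : ∀ z ∈ ball c R, ‖f z‖ ≤ M) (v : X) :
    DifferentiableAt ℂ (fun z => fderiv ℂ f z v) c := by
  have hlt : (0 : ℝ) < R / 2 / (‖v‖ + 1) := by positivity
  set s : ℂ := ((R / 2 / (‖v‖ + 1) : ℝ) : ℂ) with hs
  have hsn : ‖s‖ = R / 2 / (‖v‖ + 1) := by
    rw [hs, Complex.norm_real, Real.norm_eq_abs, abs_of_pos hlt]
  have hs0 : s ≠ 0 := by rw [← norm_pos_iff, hsn]; exact hlt
  have hR2 : 2 * (R / 2) = R := by ring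
  have := aux_phi0 (f := f) (c := c) (v := s • v) (R := R / 2) (M := M) (by positivity)
    (by rwa [hR2]) (by rwa [hR2]) (by
      rw [norm_smul, hsn, div_mul_eq_mul_div, div_lt_iff₀ (by positivity)]
      gcongr; linarith)
  have h2 := this.const_smul s⁻¹
  refine h2.congr_of_eventuallyEq (Eventually.of_forall fun z => ?_)
  simp [hs0]

theorem aux_main {f : X → ℂ} {c : X} {R M : ℝ} (hR : 0 < R)
    (hd : DifferentiableOn ℂ f (ball c (2 * R))) (hM : ∀ z ∈ ball c (2 * R), ‖f z‖ ≤ M) :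
    DifferentiableAt ℂ (fun z => fderiv ℂ f z) c := by
  have hM0 : 0 ≤ M := (norm_nonneg _).trans (hM c (mem_ball_self (by positivity)))
  have hsub : ∀ z ∈ ball c R, ball z R ⊆ ball c (2 * R) := fun z hz => by
    apply ball_subset_ball'
    have := mem_ball.1 hz
    linarith
  have hphi : ∀ v, ∀ z ∈ ball c R, DifferentiableAt ℂ (fun z => fderiv ℂ f z v) z :=
    fun v z hz => aux_phi hR (hd.mono (hsub z hz)) (fun w hw => hM w (hsub z hz hw)) v
  have hG : ∀ z ∈ ball c R, ‖fderiv ℂ f z‖ ≤ 2 * M / R :=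
    fun z hz => aux_S hR (hd.mono (hsub z hz)) (fun w hw => hM w (hsub z hz hw))
  have hGv : ∀ v, ∀ z ∈ ball c R, ‖fderiv ℂ f z v‖ ≤ 2 * M / R * ‖v‖ := fun v z hz =>
    ContinuousLinearMap.le_of_opNorm_le _ (hG z hz) v
  have hcm : c ∈ ball c R := mem_ball_self hR
  have hdv : ∀ v, DifferentiableOn ℂ (fun z => fderiv ℂ f z v) (ball c R) :=
    fun v z hz => (hphi v z hz).differentiableWithinAt
  let L0 : X →ₗ[ℂ] (X →L[ℂ] ℂ) :=
    { toFun := fun v => fderiv ℂ (fun z => fderiv ℂ f z v) c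
      map_add' := fun v w => by
        simp only [map_add]
        exact fderiv_fun_add (hphi v c hcm) (hphi w c hcm)
      map_smul' := fun a v => by
        simp only [map_smul, RingHom.id_apply]
        exact fderiv_fun_const_smul (hphi v c hcm) a }
  let L : X →L[ℂ] (X →L[ℂ] ℂ) := L0.mkContinuous (2 * (2 * M / R) / R) (fun v => by
    have := aux_S hR (hdv v) (hGv v)
    refine this.trans (le_of_eq ?_)
    ring)
  have hL : ∀ v, L v = fderiv ℂ (fun z => fderiv ℂ f z v) c := fun v => rfl
  have : HasFDerivAt (fun z => fderiv ℂ f z) L.flip c := by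
    rw [hasFDerivAt_iff_isLittleO_nhds_zero]
    refine Asymptotics.IsBigO.trans_isLittleO (g := fun h : X => ‖h‖ ^ 2) ?_ ?_
    · refine Asymptotics.IsBigO.of_bound (4 * (2 * M / R) / R ^ 2) ?_
      filter_upwards [ball_mem_nhds (0 : X) hR] with h hh
      refine ContinuousLinearMap.opNorm_le_bound _ (by positivity) fun v => ?_
      have := aux_T hR (hdv v) (hGv v) (h := h) (by simpa using hh)
      simp only [sub_apply, ContinuousLinearMap.flip_apply, hL]
      refine this.trans (le_of_eq ?_)
      simp only [norm_pow, norm_norm]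
      field_simp
    · have := Asymptotics.isLittleO_norm_pow_id (E' := X) (n := 2) (by norm_num)
      simpa using this
  exact this.differentiableAt
end aux

/-- Let `X` be a complex Banach space with open unit ball `B_X`.  The map
`Φ : 𝓗𝓛₀(B_X) → 𝓗^∞_s(B_X, X*)`, `Φ f = df`, is a surjective isometry: for `f ∈ 𝓗𝓛₀(B_X)`
the differential `df` belongs to `𝓗^∞_s(B_X, X*)` and `L(f) = sup_{x ∈ B_X} ‖df(x)‖`, and
every `g ∈ 𝓗^∞_s(B_X, X*)` equals `df` for some `f ∈ 𝓗𝓛₀(B_X)`. -/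
theorem stmt7 (X : Type*) [NormedAddCommGroup X] [NormedSpace ℂ X] [CompleteSpace X] :
    let B := Metric.ball (0 : X) 1
    let HL0 : (X → ℂ) → Prop := fun f =>
      DifferentiableOn ℂ f B ∧ f 0 = 0 ∧ ∃ K : NNReal, LipschitzOnWith K f B
    let Hs : (X → (X →L[ℂ] ℂ)) → Prop := fun g =>
      DifferentiableOn ℂ g B ∧ (∃ C : ℝ, ∀ z ∈ B, ‖g z‖ ≤ C) ∧
      ∀ x y : X, ∀ z ∈ B,
        fderiv ℂ (fun u => g u x) z y = fderiv ℂ (fun u => g u y) z x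
    (∀ f : X → ℂ, HL0 f → Hs (fun z => fderiv ℂ f z)) ∧
    (∀ f : X → ℂ, HL0 f →
      sInf {K : ℝ | 0 ≤ K ∧ ∀ x ∈ B, ∀ y ∈ B, ‖f x - f y‖ ≤ K * ‖x - y‖} =
        sSup {r : ℝ | ∃ z ∈ B, r = ‖fderiv ℂ f z‖}) ∧
    (∀ g : X → (X →L[ℂ] ℂ), Hs g →
      ∃ f : X → ℂ, HL0 f ∧ ∀ z ∈ B, fderiv ℂ f z = g z) := by
  intro B HL0 Hs
  let _ : NormedSpace ℝ X := NormedSpace.restrictScalars ℝ ℂ X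
  have hBo : IsOpen B := isOpen_ball
  have hBc : Convex ℝ B := convex_ball 0 1
  have h0B : (0 : X) ∈ B := mem_ball_self one_pos
  have happ : ∀ (g : X → (X →L[ℂ] ℂ)) (z x y : X), DifferentiableAt ℂ g z →
      fderiv ℂ (fun u => g u x) z y = fderiv ℂ g z y x := by
    intro g z x y hg
    rw [fderiv_clm_apply hg (differentiableAt_const x)]
    simp
  refine ⟨?_, ?_, ?_⟩
  · rintro f ⟨hd, hf0, K, hK⟩
    have hbd : ∀ z ∈ B, ‖f z‖ ≤ K := fun z hz => by
      have := hK.norm_sub_le hz h0B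
      rw [hf0, sub_zero, sub_zero] at this
      have hz1 : ‖z‖ < 1 := by simpa [B] using hz
      exact this.trans (mul_le_of_le_one_right K.2 hz1.le)
    have hdiff : ∀ z ∈ B, DifferentiableAt ℂ (fun z => fderiv ℂ f z) z := by
      intro z hz
      have hz1 : ‖z‖ < 1 := by simpa [B] using hz
      have hsub : ball z (2 * ((1 - ‖z‖) / 2)) ⊆ B := by
        apply ball_subset_ball'
        rw [dist_zero_right]; linarith
      exact aux_main (by linarith) (hd.mono hsub) (fun w hw => hbd w (hsub hw))
    refine ⟨fun z hz => (hdiff z hz).differentiableWithinAt, ⟨K, fun z hz =>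
      norm_fderiv_le_of_lipschitzOn ℂ (hBo.mem_nhds hz) hK⟩, fun x y z hz => ?_⟩
    rw [happ _ z x y (hdiff z hz), happ _ z y x (hdiff z hz)]
    refine second_derivative_symmetric_of_eventually (f := f) ?_ (hdiff z hz).hasFDerivAt y x
    filter_upwards [hBo.mem_nhds hz] with w hw
    exact (hd.differentiableAt (hBo.mem_nhds hw)).hasFDerivAt
  · rintro f ⟨hd, hf0, K, hK⟩
    have hle : ∀ k ∈ {K : ℝ | 0 ≤ K ∧ ∀ x ∈ B, ∀ y ∈ B, ‖f x - f y‖ ≤ K * ‖x - y‖},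
        ∀ z ∈ B, ‖fderiv ℂ f z‖ ≤ k := by
      rintro k ⟨hk0, hk⟩ z hz
      refine norm_fderiv_le_of_lip' ℂ hk0 ?_
      filter_upwards [hBo.mem_nhds hz] with x hx using hk x hx z hz
    have hKm : (K : ℝ) ∈ {K : ℝ | 0 ≤ K ∧ ∀ x ∈ B, ∀ y ∈ B, ‖f x - f y‖ ≤ K * ‖x - y‖} :=
      ⟨K.2, fun x hx y hy => hK.norm_sub_le hx hy⟩
    have hbdd : BddAbove {r : ℝ | ∃ z ∈ B, r = ‖fderiv ℂ f z‖} :=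
      ⟨K, by rintro r ⟨z, hz, rfl⟩; exact hle _ hKm z hz⟩
    apply le_antisymm
    · refine csInf_le ⟨0, fun k hk => hk.1⟩ ⟨?_, fun x hx y hy => ?_⟩
      · exact (norm_nonneg _).trans (le_csSup hbdd ⟨0, h0B, rfl⟩)
      · exact hBc.norm_image_sub_le_of_norm_fderiv_le (𝕜 := ℂ)
          (fun w hw => hd.differentiableAt (hBo.mem_nhds hw))
          (fun w hw => le_csSup hbdd ⟨w, hw, rfl⟩) hy hx
    · refine csSup_le ⟨_, 0, h0B, rfl⟩ ?_
      rintro r ⟨z, hz, rfl⟩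
      exact le_csInf ⟨_, hKm⟩ fun k hk => hle k hk z hz
  · rintro g ⟨hd, ⟨C, hC⟩, hsym⟩
    have hgd : ∀ z ∈ B, DifferentiableAt ℂ g z := fun z hz =>
      hd.differentiableAt (hBo.mem_nhds hz)
    obtain ⟨f, hf⟩ := hBc.exists_forall_hasFDerivWithinAt_of_hasFDerivWithinAt_symmetric
      (𝕜 := ℂ) (ω := g) (dω := fun z => (fderiv ℂ g z).restrictScalars ℝ)
      (fun z hz => ((hgd z hz).hasFDerivAt.restrictScalars ℝ).hasFDerivWithinAt)
      (fun z hz x _ y _ => by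
        have := hsym x y z hz
        rw [happ g z x y (hgd z hz), happ g z y x (hgd z hz)] at this
        exact this.symm)
    have hf' : ∀ z ∈ B, HasFDerivAt (fun w => f w - f 0) (g z) z := fun z hz =>
      ((hf z hz).hasFDerivAt (hBo.mem_nhds hz)).sub_const _
    refine ⟨fun w => f w - f 0, ⟨fun z hz => (hf' z hz).differentiableAt.differentiableWithinAt,
      sub_self _, C.toNNReal, ?_⟩, fun z hz => (hf' z hz).fderiv⟩
    refine hBc.lipschitzOnWith_of_nnnorm_fderiv_le (𝕜 := ℂ)
      (fun z hz => (hf' z hz).differentiableAt) (fun z hz => ?_)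
    rw [(hf' z hz).fderiv]
    exact NNReal.le_toNNReal_of_coe_le (hC z hz)
end

section
/- Let X be a complex Banach space with a Schauder basis {eₙ}ₙ. Then the mapping Φ : 𝓗𝓛₀(B_X) → 𝓗^∞_s(B_X, X*), Φ(f) = df, is a surjective isometry, where 𝓗^∞_s(B_X, X*) = { g ∈ 𝓗^∞(B_X, X*) : e_k∘d(e_n∘g) = e_n∘d(e_k∘g) for all n, k ∈ ℕ }. -/
open Filter Topology Metric Set

section aux
variable {X : Type*} [NormedAddCommGroup X] [NormedSpace ℂ X]

lemma aux_cauchy {u : X → ℂ} {c : X} {r M : ℝ} (hr : 0 < r)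
    (hd : DifferentiableOn ℂ u (ball c r)) (hM : ∀ x ∈ ball c r, ‖u x‖ ≤ M) :
    ‖fderiv ℂ u c‖ ≤ 2 * M / r := by
  refine Complex.norm_fderiv_le_div_of_mapsTo_ball hd (fun x hx => ?_) hr
  rw [mem_closedBall, dist_eq_norm]
  have h1 := hM x hx
  have h2 := hM c (mem_ball_self hr)
  have := norm_sub_le (u x) (u c)
  linarith

lemma aux_lip {f : X → ℂ} {c : X} {r K : ℝ} (hr : 0 < r)
    (hd : DifferentiableOn ℂ f (ball c (2 * r)))
    (hK : ∀ x ∈ ball c (2 * r), ∀ y ∈ ball c (2 * r), ‖f x - f y‖ ≤ K * ‖x - y‖)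
    {z w : X} (hz : z ∈ ball c r) (hw : w ∈ ball c r) :
    ‖fderiv ℂ f z - fderiv ℂ f w‖ ≤ 2 * K / r * ‖z - w‖ := by
  have hsub : ∀ p ∈ ball c r, ball p r ⊆ ball c (2 * r) := fun p hp =>
    ball_subset_ball' (by rw [mem_ball] at hp; linarith)
  have hshift : ∀ x ∈ ball w r, x + (z - w) ∈ ball z r := by
    intro x hx
    rw [mem_ball, dist_eq_norm] at hx ⊢
    convert hx using 2
    abel
  have hdat : ∀ p ∈ ball c (2 * r), DifferentiableAt ℂ f p := fun p hp =>
    hd.differentiableAt (isOpen_ball.mem_nhds hp)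
  have hu : ∀ x ∈ ball w r, HasFDerivAt (fun x => f (x + (z - w)) - f x)
      (fderiv ℂ f (x + (z - w)) - fderiv ℂ f x) x := by
    intro x hx
    refine HasFDerivAt.sub ?_ (hdat x (hsub w hw hx)).hasFDerivAt
    exact (hasFDerivAt_comp_add_right (z - w)).2
      (hdat _ (hsub z hz (hshift x hx))).hasFDerivAt
  have key := aux_cauchy (u := fun x => f (x + (z - w)) - f x) (M := K * ‖z - w‖) hr
    (fun x hx => (hu x hx).differentiableAt.differentiableWithinAt) (fun x hx => by
      have := hK _ (hsub z hz (hshift x hx)) _ (hsub w hw hx)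
      simpa using this)
  rw [(hu w (mem_ball_self hr)).fderiv] at key
  rw [add_sub_cancel] at key
  refine key.trans (le_of_eq ?_)
  ring

lemma aux_taylor {f : X → ℂ} {c : X} {r L : ℝ} 
    (hd : DifferentiableOn ℂ f (ball c r)) (hL0 : 0 ≤ L)
    (hL : ∀ x ∈ ball c r, ∀ y ∈ ball c r, ‖fderiv ℂ f x - fderiv ℂ f y‖ ≤ L * ‖x - y‖)
    {z w : X} (hz : z ∈ ball c r) (hw : w ∈ ball c r) :
    ‖f w - f z - fderiv ℂ f z (w - z)‖ ≤ L * ‖w - z‖ * ‖w - z‖ := by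
  have hs : segment ℝ z w ⊆ ball c r := (convex_ball c r).segment_subset hz hw
  refine (convex_segment z w).norm_image_sub_le_of_norm_fderiv_le' (𝕜 := ℂ)
    (fun x hx => hd.differentiableAt (isOpen_ball.mem_nhds (hs hx))) (fun x hx => ?_)
    (left_mem_segment ℝ z w) (right_mem_segment ℝ z w)
  refine (hL x (hs hx) z hz).trans ?_
  gcongr
  obtain ⟨t, ht, rfl⟩ := (segment_eq_image' ℝ z w ▸ hx)
  simp only [add_sub_cancel_left, norm_smul, Real.norm_eq_abs, abs_of_nonneg ht.1]
  exact mul_le_of_le_one_left (norm_nonneg _) ht.2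

lemma aux_weier {ι : Type*} {l : Filter ι} [l.NeBot] {F : ι → X → ℂ} {G : X → ℂ} {c : X} {r : ℝ}
    (hr : 0 < r) (hF : ∀ᶠ i in l, DifferentiableOn ℂ (F i) (ball c r))
    (hlim : TendstoUniformlyOn F G l (ball c r)) : DifferentiableAt ℂ G c := by
  have hsub : ∀ p ∈ ball c (r/2), ball p (r/2) ⊆ ball c r := fun p hp =>
    ball_subset_ball' (by rw [mem_ball] at hp; linarith)
  have hc : UniformCauchySeqOn (fun i => fderiv ℂ (F i)) l (ball c (r/2)) := by
    intro V hV
    obtain ⟨ε, hε, hεV⟩ := Metric.mem_uniformity_dist.1 hV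
    have h1 := (Metric.tendstoUniformlyOn_iff.1 hlim (ε * r / 16) (by positivity)).and hF
    filter_upwards [prod_mem_prod h1 h1] with p hp x hx
    obtain ⟨⟨ha, hda⟩, hb, hdb⟩ := hp
    apply hεV
    have hxr : x ∈ ball c r := ball_subset_ball (by linarith) hx
    have hnx := isOpen_ball.mem_nhds hxr
    have key := aux_cauchy (u := fun y => F p.1 y - F p.2 y) (c := x) (r := r / 2)
      (M := ε * r / 8) (by positivity) ((hda.sub hdb).mono (hsub x hx)) (fun y hy => by
        have e1 := ha y (hsub x hx hy)
        have e2 := hb y (hsub x hx hy)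
        have := dist_triangle_left (F p.1 y) (F p.2 y) (G y)
        rw [← dist_eq_norm]
        linarith)
    rw [fderiv_fun_sub (hda.differentiableAt hnx) (hdb.differentiableAt hnx)] at key
    rw [dist_eq_norm]
    refine key.trans_lt ?_
    have : 2 * (ε * r / 8) / (r / 2) = ε / 2 := by field_simp; norm_num
    linarith
  have hex : ∀ x ∈ ball c (r/2), ∃ y, Tendsto (fun i => fderiv ℂ (F i) x) l (𝓝 y) := fun x hx =>
    CompleteSpace.complete (hc.cauchy_map hx)
  choose! g' hg' using hex
  have hu := hc.tendstoUniformlyOn_of_tendsto hg'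
  have hn : ball c (r/2) ∈ 𝓝 c := ball_mem_nhds c (by positivity)
  refine (hasFDerivAt_of_tendstoUniformlyOnFilter (𝕜 := ℂ) (f := F) (g := G) (g' := g')
    (f' := fun i => fderiv ℂ (F i)) (l := l)
    (hu.tendstoUniformlyOnFilter.mono_right (le_principal_iff.2 hn)) ?_ ?_).differentiableAt
  · filter_upwards [prod_mem_prod hF hn] with p hp
    exact (hp.1.differentiableAt (isOpen_ball.mem_nhds
      (ball_subset_ball (by linarith) hp.2))).hasFDerivAt
  · filter_upwards [hn] with y hy
    exact hlim.tendsto_at (ball_subset_ball (by linarith) hy)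

lemma aux_dir {f : X → ℂ} {c : X} {r K : ℝ} (hr : 0 < r) (hK0 : 0 ≤ K)
    (hd : DifferentiableOn ℂ f (ball c (2 * r)))
    (hK : ∀ x ∈ ball c (2 * r), ∀ y ∈ ball c (2 * r), ‖f x - f y‖ ≤ K * ‖x - y‖) (v : X) :
    DifferentiableAt ℂ (fun z => fderiv ℂ f z v) c := by
  have hsmall : ∀ᶠ t : ℂ in 𝓝[≠] 0, t ≠ 0 ∧ ‖t‖ * ‖v‖ < r / 2 := by
    have h1 : Tendsto (fun t : ℂ => ‖t‖ * ‖v‖) (𝓝 0) (𝓝 0) := by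
      have : Continuous (fun t : ℂ => ‖t‖ * ‖v‖) := by fun_prop
      simpa using this.tendsto 0
    exact (eventually_mem_nhdsWithin).and
      ((h1.eventually (gt_mem_nhds (show (0:ℝ) < r / 2 by positivity))).filter_mono
        nhdsWithin_le_nhds)
  have hmem : ∀ t : ℂ, ‖t‖ * ‖v‖ < r / 2 → ∀ z ∈ ball c (r / 2), z + t • v ∈ ball c r := by
    intro t ht z hz
    rw [mem_ball, dist_eq_norm] at hz ⊢
    have : z + t • v - c = (z - c) + t • v := by abel
    rw [this]
    have := norm_add_le (z - c) (t • v)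
    rw [norm_smul] at this
    linarith
  have hr2 : ball c r ⊆ ball c (2 * r) := ball_subset_ball (by linarith)
  have hr3 : ball c (r / 2) ⊆ ball c r := ball_subset_ball (by linarith)
  refine aux_weier (l := 𝓝[≠] (0 : ℂ)) (F := fun t z => t⁻¹ * (f (z + t • v) - f z))
    (r := r / 2) (by positivity) ?_ ?_
  · filter_upwards [hsmall] with t ht z hz
    have h1 : DifferentiableAt ℂ f (z + t • v) :=
      hd.differentiableAt (isOpen_ball.mem_nhds (hr2 (hmem t ht.2 z hz)))
    have h2 : DifferentiableAt ℂ f z := hd.differentiableAt (isOpen_ball.mem_nhds (hr2 (hr3 hz)))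
    have h3 : DifferentiableAt ℂ (fun z => f (z + t • v)) z :=
      ((hasFDerivAt_comp_add_right (t • v)).2 h1.hasFDerivAt).differentiableAt
    exact ((h3.sub h2).const_mul _).differentiableWithinAt
  · rw [Metric.tendstoUniformlyOn_iff]
    intro ε hε
    have hs2 : ∀ᶠ t : ℂ in 𝓝[≠] 0, 2 * K / r * ‖t‖ * ‖v‖ ^ 2 < ε := by
      have h1 : Tendsto (fun t : ℂ => 2 * K / r * ‖t‖ * ‖v‖ ^ 2) (𝓝 0) (𝓝 0) := by
        have : Continuous (fun t : ℂ => 2 * K / r * ‖t‖ * ‖v‖ ^ 2) := by fun_prop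
        simpa using this.tendsto 0
      exact (h1.eventually (gt_mem_nhds hε)).filter_mono nhdsWithin_le_nhds
    filter_upwards [hsmall, hs2] with t ht ht2 z hz
    refine lt_of_le_of_lt ?_ ht2
    have key := aux_taylor (hd.mono hr2) (L := 2 * K / r) (by positivity)
      (fun x hx y hy => aux_lip hr hd hK hx hy) (hr3 hz) (hmem t ht.2 z hz)
    simp only [add_sub_cancel_left, map_smul, smul_eq_mul, norm_smul] at key
    have ht0 : 0 < ‖t‖ := norm_pos_iff.2 ht.1
    rw [dist_comm, dist_eq_norm]
    have : t⁻¹ * (f (z + t • v) - f z) - fderiv ℂ f z v =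
        t⁻¹ * (f (z + t • v) - f z - t * fderiv ℂ f z v) := by
      have := ht.1
      field_simp
    rw [this, norm_mul, norm_inv, inv_mul_le_iff₀ ht0]
    refine key.trans (le_of_eq ?_)
    ring

lemma aux_main_s11 {f : X → ℂ} {c : X} {r K : ℝ} (hr : 0 < r) (hK0 : 0 ≤ K)
    (hd : DifferentiableOn ℂ f (ball c (2 * (2 * r))))
    (hK : ∀ x ∈ ball c (2 * (2 * r)), ∀ y ∈ ball c (2 * (2 * r)), ‖f x - f y‖ ≤ K * ‖x - y‖) :
    DifferentiableAt ℂ (fderiv ℂ f) c := by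
  have hG : ∀ v : X, DifferentiableOn ℂ (fun z => fderiv ℂ f z v) (ball c (2 * r)) := by
    intro v z hz
    have hsub : ball z (2 * r) ⊆ ball c (2 * (2 * r)) :=
      ball_subset_ball' (by rw [mem_ball] at hz; linarith)
    exact (aux_dir hr hK0 (hd.mono hsub) (fun x hx y hy => hK x (hsub hx) y (hsub hy))
      v).differentiableWithinAt
  have hL : ∀ x ∈ ball c (2 * r), ∀ y ∈ ball c (2 * r),
      ‖fderiv ℂ f x - fderiv ℂ f y‖ ≤ 2 * K / (2 * r) * ‖x - y‖ :=
    fun x hx y hy => aux_lip (by positivity) hd hK hx hy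
  set L := 2 * K / (2 * r) with hLdef
  have hL0 : 0 ≤ L := by positivity
  have hGL : ∀ v : X, ∀ x ∈ ball c (2 * r), ∀ y ∈ ball c (2 * r),
      ‖fderiv ℂ f x v - fderiv ℂ f y v‖ ≤ L * ‖v‖ * ‖x - y‖ := by
    intro v x hx y hy
    rw [← sub_apply]
    refine ((fderiv ℂ f x - fderiv ℂ f y).le_opNorm v).trans ?_
    have := mul_le_mul_of_nonneg_right (hL x hx y hy) (norm_nonneg v)
    linarith
  have hc2 : c ∈ ball c (2 * r) := mem_ball_self (by positivity)
  have hGd : ∀ v : X, DifferentiableAt ℂ (fun z => fderiv ℂ f z v) c := fun v =>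
    (hG v).differentiableAt (isOpen_ball.mem_nhds hc2)
  let D : X →L[ℂ] X →L[ℂ] ℂ := LinearMap.mkContinuous₂
    (LinearMap.mk₂ ℂ (fun h v => fderiv ℂ (fun z => fderiv ℂ f z v) c h)
      (fun _ _ _ => by simp) (fun _ _ _ => by simp)
      (fun h v w => by
        have : (fun z => fderiv ℂ f z (v + w)) = fun z => fderiv ℂ f z v + fderiv ℂ f z w := by
          ext z; simp
        rw [this, fderiv_fun_add (hGd v) (hGd w)]; simp)
      (fun a h v => by
        have : (fun z => fderiv ℂ f z (a • v)) = fun z => a • fderiv ℂ f z v := by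
          ext z; simp
        rw [this, fderiv_fun_const_smul (hGd v)]; simp)) L (by
      intro h v
      simp only [LinearMap.mk₂_apply]
      have h1 : ‖fderiv ℂ (fun z => fderiv ℂ f z v) c‖ ≤ L * ‖v‖ := by
        refine norm_fderiv_le_of_lip' ℂ (by positivity) ?_
        filter_upwards [isOpen_ball.mem_nhds hc2] with x hx
        exact hGL v x hx c hc2
      refine (ContinuousLinearMap.le_of_opNorm_le _ h1 h).trans (le_of_eq ?_)
      ring)
  have hD : ∀ h v, D h v = fderiv ℂ (fun z => fderiv ℂ f z v) c h := fun h v => rfl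
  have hest : ∀ h : X, ‖h‖ < r →
      ‖fderiv ℂ f (c + h) - fderiv ℂ f c - D h‖ ≤ 2 * L / r * ‖h‖ ^ 2 := by
    intro h hh
    refine ContinuousLinearMap.opNorm_le_bound _ (by positivity) (fun v => ?_)
    have key := aux_taylor (f := fun z => fderiv ℂ f z v) (c := c) (r := r)
      (L := 2 * (L * ‖v‖) / r) (z := c) (w := c + h)
      ((hG v).mono (ball_subset_ball (by linarith))) (by positivity)
      (fun x hx y hy => aux_lip hr (hG v) (hGL v) hx hy) (mem_ball_self hr) (by simpa using hh)
    simp only [add_sub_cancel_left] at key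
    simp only [sub_apply, hD]
    refine key.trans (le_of_eq ?_)
    ring
  refine HasFDerivAt.differentiableAt (f' := D) ?_
  rw [hasFDerivAt_iff_isLittleO_nhds_zero]
  have hO : (fun h => fderiv ℂ f (c + h) - fderiv ℂ f c - D h) =O[𝓝 0] fun h => ‖h‖ ^ 2 := by
    refine Asymptotics.IsBigO.of_bound (2 * L / r) ?_
    filter_upwards [ball_mem_nhds (0 : X) hr] with h hh
    simpa using hest h (by simpa using hh)
  refine hO.trans_isLittleO ?_
  exact Asymptotics.isLittleO_norm_pow_id one_lt_two

lemma aux_symm {e : ℕ → X} (hbasis : ∀ x : X, ∃! a : ℕ → ℂ,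
      Filter.Tendsto (fun N => ∑ n ∈ Finset.range N, a n • e n) Filter.atTop (nhds x))
    (D : X →L[ℂ] X →L[ℂ] ℂ) (hD : ∀ n m, D (e n) (e m) = D (e m) (e n)) (x y : X) :
    D x y = D y x := by
  have hdense : ∀ p q : X →L[ℂ] ℂ, (∀ n, p (e n) = q (e n)) → p = q := by
    intro p q h
    ext x
    obtain ⟨a, ha, -⟩ := hbasis x
    refine tendsto_nhds_unique ((p.continuous.tendsto x).comp ha) ?_
    refine ((q.continuous.tendsto x).comp ha).congr (fun N => ?_)
    simp [h]
  have h1 : ∀ n, D (e n) = D.flip (e n) := fun n => hdense _ _ (fun m => by simpa using hD n m)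
  have h2 : D y = D.flip y := hdense _ _ (fun m => by
    have := congrArg (fun p => p y) (h1 m)
    simpa using this.symm)
  simpa using (congrArg (fun p => p x) h2).symm

end aux

/-- Let `X` be a complex Banach space with a Schauder basis `{eₙ}`.  Then
`Φ : 𝓗𝓛₀(B_X) → 𝓗^∞_s(B_X, X*)`, `Φ f = df`, is a surjective isometry, where
`𝓗^∞_s(B_X, X*) = {g ∈ 𝓗^∞(B_X, X*) : e_k ∘ d(e_n ∘ g) = e_n ∘ d(e_k ∘ g) ∀ n, k}`. -/
theorem stmt11 (X : Type*) [NormedAddCommGroup X] [NormedSpace ℂ X] [CompleteSpace X]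
    (e : ℕ → X)
    (hbasis : ∀ x : X, ∃! a : ℕ → ℂ,
      Filter.Tendsto (fun N => ∑ n ∈ Finset.range N, a n • e n) Filter.atTop (nhds x)) :
    let B := Metric.ball (0 : X) 1
    let HL0 : (X → ℂ) → Prop := fun f =>
      DifferentiableOn ℂ f B ∧ f 0 = 0 ∧ ∃ K : NNReal, LipschitzOnWith K f B
    let Hs : (X → (X →L[ℂ] ℂ)) → Prop := fun g =>
      DifferentiableOn ℂ g B ∧ (∃ C : ℝ, ∀ z ∈ B, ‖g z‖ ≤ C) ∧
      ∀ n m : ℕ, ∀ z ∈ B,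
        fderiv ℂ (fun u => g u (e n)) z (e m) = fderiv ℂ (fun u => g u (e m)) z (e n)
    (∀ f : X → ℂ, HL0 f → Hs (fun z => fderiv ℂ f z)) ∧
    (∀ f : X → ℂ, HL0 f →
      sInf {K : ℝ | 0 ≤ K ∧ ∀ x ∈ B, ∀ y ∈ B, ‖f x - f y‖ ≤ K * ‖x - y‖} =
        sSup {r : ℝ | ∃ z ∈ B, r = ‖fderiv ℂ f z‖}) ∧
    (∀ g : X → (X →L[ℂ] ℂ), Hs g →
      ∃ f : X → ℂ, HL0 f ∧ ∀ z ∈ B, fderiv ℂ f z = g z) := by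
  intro B HL0 Hs
  have hBo : IsOpen B := isOpen_ball
  have hBc : Convex ℝ B := convex_ball _ _
  refine ⟨?_, ?_, ?_⟩
  · rintro f ⟨hd, -, K, hK⟩
    have hdd : ∀ z ∈ B, DifferentiableAt ℂ (fderiv ℂ f) z := by
      intro z hz
      have hz1 : ‖z‖ < 1 := by simpa [B] using hz
      have hsub : ball z (2 * (2 * ((1 - ‖z‖) / 4))) ⊆ B :=
        ball_subset_ball' (by rw [dist_zero_right]; linarith)
      exact aux_main_s11 (K := K) (by linarith) K.2 (hd.mono hsub)
        (fun x hx y hy => hK.norm_sub_le (hsub hx) (hsub hy))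
    refine ⟨fun z hz => (hdd z hz).differentiableWithinAt, ⟨K, fun z hz =>
      norm_fderiv_le_of_lipschitzOn ℂ (hBo.mem_nhds hz) hK⟩, fun n m z hz => ?_⟩
    have hs := second_derivative_symmetric_of_eventually (𝕜 := ℂ) (f := f) (f' := fderiv ℂ f)
      (x := z) (f'' := fderiv ℂ (fderiv ℂ f) z)
      (by filter_upwards [hBo.mem_nhds hz] with y hy
          exact (hd.differentiableAt (hBo.mem_nhds hy)).hasFDerivAt)
      (hdd z hz).hasFDerivAt (e m) (e n)
    have h1 : ∀ v w, fderiv ℂ (fun u => fderiv ℂ f u v) z w = fderiv ℂ (fderiv ℂ f) z w v := by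
      intro v w
      rw [fderiv_clm_apply (hdd z hz) (differentiableAt_const v)]
      simp
    rw [h1, h1, hs]
  · rintro f ⟨hd, -, K, hK⟩
    have hdat : ∀ z ∈ B, DifferentiableAt ℂ f z := fun z hz =>
      hd.differentiableAt (hBo.mem_nhds hz)
    have h0 : (0 : X) ∈ B := mem_ball_self one_pos
    have hbdd : BddAbove {r : ℝ | ∃ z ∈ B, r = ‖fderiv ℂ f z‖} := by
      refine ⟨K, ?_⟩
      rintro _ ⟨z, hz, rfl⟩
      exact norm_fderiv_le_of_lipschitzOn ℂ (hBo.mem_nhds hz) hK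
    have hle : ∀ z ∈ B, ‖fderiv ℂ f z‖ ≤ sSup {r : ℝ | ∃ z ∈ B, r = ‖fderiv ℂ f z‖} :=
      fun z hz => le_csSup hbdd ⟨z, hz, rfl⟩
    have hmem : sSup {r : ℝ | ∃ z ∈ B, r = ‖fderiv ℂ f z‖} ∈
        {K : ℝ | 0 ≤ K ∧ ∀ x ∈ B, ∀ y ∈ B, ‖f x - f y‖ ≤ K * ‖x - y‖} :=
      ⟨(norm_nonneg _).trans (hle 0 h0), fun x hx y hy =>
        hBc.norm_image_sub_le_of_norm_fderiv_le hdat hle hy hx⟩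
    refine le_antisymm (csInf_le ⟨0, fun _ h => h.1⟩ hmem) (le_csInf ⟨_, hmem⟩ ?_)
    rintro C ⟨hC0, hC⟩
    refine csSup_le ⟨_, 0, h0, rfl⟩ ?_
    rintro _ ⟨z, hz, rfl⟩
    refine norm_fderiv_le_of_lip' ℂ hC0 ?_
    filter_upwards [hBo.mem_nhds hz] with x hx
    exact hC x hx z hz
  · rintro g ⟨hd, ⟨C, hC⟩, hsym⟩
    have hdat : ∀ z ∈ B, DifferentiableAt ℂ g z := fun z hz =>
      hd.differentiableAt (hBo.mem_nhds hz)
    have h1 : ∀ z ∈ B, ∀ v w, fderiv ℂ (fun u => g u v) z w = fderiv ℂ g z w v := by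
      intro z hz v w
      rw [fderiv_clm_apply (hdat z hz) (differentiableAt_const v)]
      simp
    obtain ⟨f, hf⟩ := hBc.exists_forall_hasFDerivAt_of_fderiv_symmetric (ω := g) hBo
      (fun z hz => ((hdat z hz).restrictScalars ℝ).differentiableWithinAt) (fun z hz x y => by
        rw [(hdat z hz).fderiv_restrictScalars ℝ]
        refine aux_symm hbasis (fderiv ℂ g z) (fun n m => ?_) x y
        rw [← h1 z hz, ← h1 z hz, hsym _ _ z hz])
    have hf' : ∀ z ∈ B, HasFDerivAt (fun z => f z - f 0) (g z) z := fun z hz =>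
      (hf z hz).sub_const _
    refine ⟨fun z => f z - f 0, ⟨fun z hz => (hf' z hz).differentiableAt.differentiableWithinAt,
      by simp, C.toNNReal, ?_⟩, fun z hz => (hf' z hz).fderiv⟩
    refine LipschitzOnWith.of_dist_le_mul (fun x hx y hy => ?_)
    rw [dist_eq_norm, dist_eq_norm]
    refine hBc.norm_image_sub_le_of_norm_hasFDerivWithin_le
      (fun z hz => (hf' z hz).hasFDerivWithinAt) (fun z hz => ?_) hy hx
    exact (hC z hz).trans (Real.le_coe_toNNReal C)
end

section
/- Let X and Y be complex Banach spaces. The mapping Φ : 𝓗𝓛₀(B_X, Y) → 𝓗^∞_s(B_X, 𝓛(X,Y)) given by Φ(f) = df is a surjective isometry: for every f ∈ 𝓗𝓛₀(B_X, Y), df belongs to 𝓗^∞_s(B_X, 𝓛(X,Y)) with L(f) = sup_{x∈B_X} ‖df(x)‖, and every g ∈ 𝓗^∞_s(B_X, 𝓛(X,Y)) equals df for some f ∈ 𝓗𝓛₀(B_X, Y). -/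
section Helpers

open Metric Set Filter Topology

variable {X Y : Type*} [NormedAddCommGroup X] [NormedSpace ℂ X]
    [NormedAddCommGroup Y] [NormedSpace ℂ Y]

theorem aux_cauchy_s14 {f : X → Y} {z : X} {R M : ℝ} (hR : 0 < R)
    (hf : DifferentiableOn ℂ f (ball z R)) (hM : ∀ u ∈ ball z R, ‖f u‖ ≤ M) :
    ‖fderiv ℂ f z‖ ≤ 2 * M / R := by
  apply Complex.norm_fderiv_le_div_of_mapsTo_ball hf _ hR
  intro u hu
  rw [mem_closedBall, dist_eq_norm]
  calc ‖f u - f z‖ ≤ ‖f u‖ + ‖f z‖ := norm_sub_le _ _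
    _ ≤ 2 * M := by linarith [hM u hu, hM z (mem_ball_self hR)]

theorem aux_quad [CompleteSpace Y] {f : X → Y} {z h : X} {R M : ℝ} (hR : 0 < R)
    (hf : DifferentiableOn ℂ f (ball z R)) (hM : ∀ u ∈ ball z R, ‖f u‖ ≤ M) (hh : ‖h‖ < R) :
    ‖f (z + h) - f z - fderiv ℂ f z h‖ ≤ 4 * M / R ^ 2 * ‖h‖ ^ 2 := by
  rcases eq_or_ne h 0 with rfl | h0
  · simp
  have hp : 0 < ‖h‖ := norm_pos_iff.2 h0
  set ρ := R / ‖h‖ with hρ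
  have hρ0 : 0 < ρ := div_pos hR hp
  set φ : ℂ → Y := fun t => f (z + t • h) with hφ
  have hmem : ∀ t ∈ ball (0 : ℂ) ρ, z + t • h ∈ ball z R := by
    intro t ht
    rw [mem_ball_zero_iff, hρ, lt_div_iff₀ hp] at ht
    simpa [norm_smul] using ht
  have hφd : DifferentiableOn ℂ φ (ball 0 ρ) := by
    apply hf.comp (f := fun t : ℂ => z + t • h) (by fun_prop) hmem
  have hφb : MapsTo φ (ball 0 ρ) (closedBall (φ 0) (2 * M)) := by
    intro t ht
    rw [mem_closedBall, dist_eq_norm]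
    have h1 := hM _ (hmem t ht)
    have h2 := hM _ (hmem 0 (mem_ball_self hρ0))
    calc ‖φ t - φ 0‖ ≤ ‖φ t‖ + ‖φ 0‖ := norm_sub_le _ _
      _ ≤ 2 * M := by simp only [hφ]; linarith
  have hψb : ∀ t ∈ ball (0 : ℂ) ρ, ‖dslope φ 0 t‖ ≤ 2 * M / ρ := fun t ht =>
    Complex.norm_dslope_le_div_of_mapsTo_ball hφd hφb ht
  have hψd : DifferentiableOn ℂ (dslope φ 0) (ball 0 ρ) :=
    (Complex.differentiableOn_dslope (ball_mem_nhds _ hρ0)).2 hφd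
  have h1 : (1 : ℂ) ∈ ball (0 : ℂ) ρ := by
    rw [mem_ball_zero_iff, hρ, lt_div_iff₀ hp]; simpa using hh
  have key := Complex.dist_le_div_mul_dist_of_mapsTo_ball (R₂ := 4 * M / ρ) hψd (by
    intro t ht
    rw [mem_closedBall, dist_eq_norm]
    calc _ ≤ ‖dslope φ 0 t‖ + ‖dslope φ 0 0‖ := norm_sub_le _ _
      _ ≤ 2 * M / ρ + 2 * M / ρ := add_le_add (hψb t ht) (hψb 0 (mem_ball_self hρ0))
      _ = _ := by ring) h1
  have hder : deriv φ 0 = fderiv ℂ f z h := by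
    have hd : HasFDerivAt f (fderiv ℂ f z) (z + (0 : ℂ) • h) := by
      simpa using (hf.differentiableAt (ball_mem_nhds _ hR)).hasFDerivAt
    have h2 : HasDerivAt (fun t : ℂ => z + t • h) h 0 := by
      simpa using ((hasDerivAt_id (0 : ℂ)).smul_const h).const_add z
    exact (hd.comp_hasDerivAt (0 : ℂ) h2).deriv
  rw [dslope_same, dslope_of_ne _ one_ne_zero, slope_def_module, hder, dist_eq_norm] at key
  simp only [hφ, sub_zero, inv_one, one_smul, zero_smul, add_zero, dist_zero_right, norm_one,
    mul_one] at key
  refine key.trans_eq ?_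
  rw [hρ]
  field_simp

theorem aux_limit [CompleteSpace Y] {g : X → Y} {z : X} {r : ℝ} (hr : 0 < r)
    (H : ∀ ε : ℝ, 0 < ε → ∃ F : X → Y, DifferentiableOn ℂ F (ball z r) ∧
      ∀ u ∈ ball z r, ‖F u - g u‖ ≤ ε) : DifferentiableAt ℂ g z := by
  choose F hFd hF using fun n : ℕ => H (1 / ((n : ℝ) + 1)) (by positivity)
  have hsub : ∀ u ∈ ball z (r / 2), ball u (r / 2) ⊆ ball z r := by
    intro u hu
    apply ball_subset_ball'
    rw [mem_ball] at hu
    linarith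
  have hdiff : ∀ n, ∀ u ∈ ball z r, DifferentiableAt ℂ (F n) u := fun n u hu =>
    (hFd n).differentiableAt (isOpen_ball.mem_nhds hu)
  have hC : ∀ n m, ∀ u ∈ ball z (r / 2), ‖fderiv ℂ (F n) u - fderiv ℂ (F m) u‖ ≤
      2 * (1 / ((n : ℝ) + 1) + 1 / ((m : ℝ) + 1)) / (r / 2) := by
    intro n m u hu
    have hu' : u ∈ ball z r := hsub u hu (mem_ball_self (by positivity))
    rw [← fderiv_sub (hdiff n u hu') (hdiff m u hu')]
    apply aux_cauchy_s14 (by positivity) (((hFd n).sub (hFd m)).mono (hsub u hu))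
    intro w hw
    have hw' := hsub u hu hw
    calc ‖(F n - F m) w‖ = ‖(F n w - g w) - (F m w - g w)‖ := by simp
      _ ≤ ‖F n w - g w‖ + ‖F m w - g w‖ := norm_sub_le _ _
      _ ≤ _ := add_le_add (hF n w hw') (hF m w hw')
  have hlim : Tendsto (fun n : ℕ => 1 / ((n : ℝ) + 1)) atTop (𝓝 0) :=
    tendsto_one_div_add_atTop_nhds_zero_nat
  have hUC : UniformCauchySeqOn (fun n u => fderiv ℂ (F n) u) atTop (ball z (r / 2)) := by
    rw [Metric.uniformCauchySeqOn_iff]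
    intro ε hε
    have : ∀ᶠ n : ℕ in atTop, 1 / ((n : ℝ) + 1) < ε * r / 8 :=
      hlim.eventually (gt_mem_nhds (by positivity))
    obtain ⟨N, hN⟩ := eventually_atTop.1 this
    refine ⟨N, fun m hm n hn u hu => ?_⟩
    rw [dist_eq_norm]
    refine (hC m n u hu).trans_lt ?_
    rw [div_lt_iff₀ (by positivity)]
    linarith [hN m hm, hN n hn]
  have hex : ∀ u, ∃ L : X →L[ℂ] Y, u ∈ ball z (r / 2) →
      Tendsto (fun n => fderiv ℂ (F n) u) atTop (𝓝 L) := by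
    intro u
    by_cases hu : u ∈ ball z (r / 2)
    · obtain ⟨L, hL⟩ := cauchySeq_tendsto_of_complete (hUC.cauchySeq hu)
      exact ⟨L, fun _ => hL⟩
    · exact ⟨0, fun h => absurd h hu⟩
  choose g' hg' using hex
  have hTU := hUC.tendstoUniformlyOn_of_tendsto (fun u hu => hg' u hu)
  refine (hasFDerivAt_of_tendstoUniformlyOn (g := g) isOpen_ball hTU
    (fun n u hu => (hdiff n u (hsub u hu (mem_ball_self (by positivity)))).hasFDerivAt) ?_
    (mem_ball_self (by positivity : 0 < r / 2))).differentiableAt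
  intro u hu
  rw [tendsto_iff_norm_sub_tendsto_zero]
  exact squeeze_zero (fun _ => norm_nonneg _)
    (fun n => hF n u (hsub u hu (mem_ball_self (by positivity)))) hlim

theorem aux_apply [CompleteSpace Y] {f : X → Y} {z : X} {R M : ℝ} (hR : 0 < R)
    (hf : DifferentiableOn ℂ f (ball z R)) (hM : ∀ u ∈ ball z R, ‖f u‖ ≤ M) (v : X) :
    DifferentiableAt ℂ (fun u => fderiv ℂ f u v) z := by
  have hM0 : 0 ≤ M := (norm_nonneg _).trans (hM z (mem_ball_self hR))
  have hsub : ∀ u ∈ ball z (R / 2), ball u (R / 2) ⊆ ball z R := by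
    intro u hu
    apply ball_subset_ball'
    rw [mem_ball] at hu
    linarith
  apply aux_limit (half_pos hR)
  intro ε hε
  obtain ⟨t, ht0, ht1, ht2⟩ : ∃ t : ℝ, 0 < t ∧ t * ‖v‖ < R / 2 ∧
      4 * M / (R / 2) ^ 2 * ‖v‖ ^ 2 * t ≤ ε := by
    have e1 : ∀ᶠ t : ℝ in 𝓝[>] 0, t * ‖v‖ < R / 2 := by
      apply Filter.Eventually.filter_mono nhdsWithin_le_nhds
      apply ContinuousAt.eventually_lt (by fun_prop) (by fun_prop)
      simpa using hR
    have e2 : ∀ᶠ t : ℝ in 𝓝[>] 0, 4 * M / (R / 2) ^ 2 * ‖v‖ ^ 2 * t < ε := by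
      apply Filter.Eventually.filter_mono nhdsWithin_le_nhds
      apply ContinuousAt.eventually_lt (by fun_prop) (by fun_prop)
      simpa using hε
    obtain ⟨t, h1, h2, h3⟩ := (e1.and (e2.and self_mem_nhdsWithin)).exists
    exact ⟨t, h3, h1, h2.le⟩
  have htv : ‖(t : ℂ) • v‖ = t * ‖v‖ := by
    rw [norm_smul, Complex.norm_real, Real.norm_of_nonneg ht0.le]
  have htC : (t : ℂ) ≠ 0 := by exact_mod_cast ht0.ne'
  refine ⟨fun u => (t : ℂ)⁻¹ • (f (u + (t : ℂ) • v) - f u), ?_, ?_⟩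
  · apply DifferentiableOn.const_smul
    apply DifferentiableOn.sub
    · apply hf.comp (f := fun u => u + (t : ℂ) • v) (by fun_prop)
      intro u hu
      apply hsub u hu
      rw [mem_ball, dist_eq_norm, add_sub_cancel_left, htv]
      exact ht1
    · exact hf.mono (ball_subset_ball (by linarith))
  · intro u hu
    have q := aux_quad (h := (t : ℂ) • v) (half_pos hR) (hf.mono (hsub u hu))
      (fun w hw => hM w (hsub u hu hw)) (by rw [htv]; exact ht1)
    have e : (t : ℂ)⁻¹ • (f (u + (t : ℂ) • v) - f u) - fderiv ℂ f u v =
        (t : ℂ)⁻¹ • (f (u + (t : ℂ) • v) - f u - fderiv ℂ f u ((t : ℂ) • v)) := by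
      rw [map_smul, smul_sub _ _ ((t : ℂ) • _), smul_smul, inv_mul_cancel₀ htC, one_smul]
    rw [e, norm_smul, norm_inv, Complex.norm_real, Real.norm_of_nonneg ht0.le,
      inv_mul_le_iff₀ ht0]
    refine q.trans ?_
    rw [htv]
    calc _ = t * (4 * M / (R / 2) ^ 2 * ‖v‖ ^ 2 * t) := by ring
      _ ≤ _ := mul_le_mul_of_nonneg_left ht2 ht0.le

theorem aux_fderiv [CompleteSpace Y] {f : X → Y} {z : X} {R M K : ℝ} (hR : 0 < R)
    (hf : DifferentiableOn ℂ f (ball z R)) (hM : ∀ u ∈ ball z R, ‖f u‖ ≤ M)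
    (hK : ∀ u ∈ ball z R, ‖fderiv ℂ f u‖ ≤ K) :
    DifferentiableAt ℂ (fun u => fderiv ℂ f u) z := by
  have hd : ∀ v, DifferentiableOn ℂ (fun u => fderiv ℂ f u v) (ball z R) := by
    intro v u hu
    have hpos : 0 < R - dist u z := by rw [mem_ball] at hu; linarith
    have hs : ball u (R - dist u z) ⊆ ball z R := ball_subset_ball' (by linarith)
    exact (aux_apply hpos (hf.mono hs) (fun w hw => hM w (hs hw)) v).differentiableWithinAt
  have hdz : ∀ v, DifferentiableAt ℂ (fun u => fderiv ℂ f u v) z := fun v =>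
    (hd v).differentiableAt (ball_mem_nhds _ hR)
  have hb : ∀ v, ∀ u ∈ ball z R, ‖fderiv ℂ f u v‖ ≤ K * ‖v‖ := fun v u hu =>
    (fderiv ℂ f u).le_of_opNorm_le (hK u hu) v
  have hK0 : 0 ≤ K := (norm_nonneg _).trans (hK z (mem_ball_self hR))
  let A0 : X →ₗ[ℂ] X →ₗ[ℂ] Y := LinearMap.mk₂ ℂ
    (fun h v => fderiv ℂ (fun u => fderiv ℂ f u v) z h)
    (fun a b v => map_add _ a b) (fun c a v => map_smul _ c a)
    (fun a v w => by
      have : (fun u => fderiv ℂ f u (v + w)) =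
        (fun u => fderiv ℂ f u v) + (fun u => fderiv ℂ f u w) := by ext u; simp
      rw [this, fderiv_add (hdz v) (hdz w)]; rfl)
    (fun c a v => by
      have : (fun u => fderiv ℂ f u (c • v)) = c • (fun u => fderiv ℂ f u v) := by ext u; simp
      rw [this, fderiv_const_smul (hdz v)]; rfl)
  let A : X →L[ℂ] X →L[ℂ] Y := A0.mkContinuous₂ (2 * K / R) (by
    intro h v
    refine ((fderiv ℂ (fun u => fderiv ℂ f u v) z).le_of_opNorm_le
      (aux_cauchy_s14 hR (hd v) (hb v)) h).trans_eq ?_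
    ring)
  have hA : ∀ h v, A h v = fderiv ℂ (fun u => fderiv ℂ f u v) z h := fun h v => rfl
  have : HasFDerivAt (fun u => fderiv ℂ f u) A z := by
    rw [hasFDerivAt_iff_isLittleO_nhds_zero]
    have hO : (fun h => fderiv ℂ f (z + h) - fderiv ℂ f z - A h) =O[𝓝 0]
        (fun h : X => ‖h‖ ^ 2) := by
      apply Asymptotics.IsBigO.of_bound (4 * K / R ^ 2)
      filter_upwards [ball_mem_nhds (0 : X) hR] with h hh
      rw [mem_ball_zero_iff] at hh
      apply ContinuousLinearMap.opNorm_le_bound _ (by positivity)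
      intro v
      have := aux_quad hR (hd v) (hb v) hh
      rw [← hA] at this
      refine this.trans_eq ?_
      rw [norm_pow, norm_norm]
      ring
    refine hO.trans_isLittleO ?_
    rw [← Asymptotics.isLittleO_norm_right]
    exact (Asymptotics.isLittleO_pow_id one_lt_two).comp_tendsto (tendsto_norm_zero (E := X))
  exact this.differentiableAt

end Helpers

open Metric


/-- vector-valued version of Statement 7. Let `X, Y` be complex Banach
spaces.  The map `Φ : 𝓗𝓛₀(B_X, Y) → 𝓗^∞_s(B_X, 𝓛(X,Y))`, `Φ f = df`, is a surjective
isometry: for `f ∈ 𝓗𝓛₀(B_X, Y)` the differential `df` belongs to `𝓗^∞_s(B_X, 𝓛(X,Y))` with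
`L(f) = sup_{x ∈ B_X} ‖df(x)‖`, and every `g ∈ 𝓗^∞_s(B_X, 𝓛(X,Y))` equals `df` for some
`f ∈ 𝓗𝓛₀(B_X, Y)`. -/
theorem stmt14 (X Y : Type*) [NormedAddCommGroup X] [NormedSpace ℂ X] [CompleteSpace X]
    [NormedAddCommGroup Y] [NormedSpace ℂ Y] [CompleteSpace Y] :
    let B := Metric.ball (0 : X) 1
    let HL0 : (X → Y) → Prop := fun f =>
      DifferentiableOn ℂ f B ∧ f 0 = 0 ∧ ∃ K : NNReal, LipschitzOnWith K f B
    let Hs : (X → (X →L[ℂ] Y)) → Prop := fun g =>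
      DifferentiableOn ℂ g B ∧ (∃ C : ℝ, ∀ z ∈ B, ‖g z‖ ≤ C) ∧
      ∀ x y : X, ∀ z ∈ B,
        fderiv ℂ (fun u => g u x) z y = fderiv ℂ (fun u => g u y) z x
    (∀ f : X → Y, HL0 f → Hs (fun z => fderiv ℂ f z)) ∧
    (∀ f : X → Y, HL0 f →
      sInf {K : ℝ | 0 ≤ K ∧ ∀ x ∈ B, ∀ y ∈ B, ‖f x - f y‖ ≤ K * ‖x - y‖} =
        sSup {r : ℝ | ∃ z ∈ B, r = ‖fderiv ℂ f z‖}) ∧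
    (∀ g : X → (X →L[ℂ] Y), Hs g →
      ∃ f : X → Y, HL0 f ∧ ∀ z ∈ B, fderiv ℂ f z = g z) := by
  intro B HL0 Hs
  have hopen : IsOpen B := isOpen_ball
  have hconv : Convex ℝ B := convex_ball _ _
  have h0B : (0 : X) ∈ B := mem_ball_self one_pos
  have hbd : ∀ (f : X → Y) (K : ℝ), 0 ≤ K → (∀ x ∈ B, ∀ y ∈ B, ‖f x - f y‖ ≤ K * ‖x - y‖) →
      ∀ z ∈ B, ‖fderiv ℂ f z‖ ≤ K := by
    intro f K hK0 hK z hz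
    apply norm_fderiv_le_of_lip' _ hK0
    filter_upwards [hopen.mem_nhds hz] with x hx using hK x hx z hz
  have hlip : ∀ (f : X → Y) (K : NNReal), LipschitzOnWith K f B →
      ∀ x ∈ B, ∀ y ∈ B, ‖f x - f y‖ ≤ K * ‖x - y‖ := by
    intro f K hK x hx y hy
    simpa [dist_eq_norm] using hK.dist_le_mul x hx y hy
  refine ⟨?_, ?_, ?_⟩
  · rintro f ⟨hf, hf0, K, hK⟩
    have hK' := hbd f K K.2 (hlip f K hK)
    have hM : ∀ u ∈ B, ‖f u‖ ≤ K := by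
      intro u hu
      have h1 := hlip f K hK u hu 0 h0B
      have h2 : ‖u‖ < 1 := mem_ball_zero_iff.1 hu
      rw [hf0, sub_zero, sub_zero] at h1
      exact h1.trans (mul_le_of_le_one_right K.2 h2.le)
    have hdd : ∀ z ∈ B, DifferentiableAt ℂ (fun u => fderiv ℂ f u) z := by
      intro z hz
      obtain ⟨R, hR, hs⟩ := Metric.isOpen_iff.1 hopen z hz
      exact aux_fderiv hR (hf.mono hs) (fun u hu => hM u (hs hu)) (fun u hu => hK' u (hs hu))
    refine ⟨fun z hz => (hdd z hz).differentiableWithinAt, ⟨K, hK'⟩, ?_⟩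
    intro x y z hz
    have e : ∀ v w, fderiv ℂ (fun u => fderiv ℂ f u v) z w =
        fderiv ℂ (fun u => fderiv ℂ f u) z w v := by
      intro v w
      rw [fderiv_clm_apply (hdd z hz) (by fun_prop)]
      simp
    rw [e, e]
    refine second_derivative_symmetric_of_eventually (f := f) ?_ (hdd z hz).hasFDerivAt _ _
    filter_upwards [hopen.mem_nhds hz] with u hu using
      (hf.differentiableAt (hopen.mem_nhds hu)).hasFDerivAt
  · rintro f ⟨hf, hf0, K, hK⟩
    have hK' := hbd f K K.2 (hlip f K hK)
    have hne : {r : ℝ | ∃ z ∈ B, r = ‖fderiv ℂ f z‖}.Nonempty := ⟨_, 0, h0B, rfl⟩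
    have hba : BddAbove {r : ℝ | ∃ z ∈ B, r = ‖fderiv ℂ f z‖} := by
      refine ⟨K, ?_⟩
      rintro r ⟨z, hz, rfl⟩
      exact hK' z hz
    apply le_antisymm
    · apply csInf_le ⟨0, fun r hr => hr.1⟩
      refine ⟨(norm_nonneg _).trans (le_csSup hba ⟨0, h0B, rfl⟩), ?_⟩
      intro x hx y hy
      exact hconv.norm_image_sub_le_of_norm_fderiv_le (𝕜 := ℂ)
        (fun u hu => hf.differentiableAt (hopen.mem_nhds hu))
        (fun u hu => le_csSup hba ⟨u, hu, rfl⟩) hy hx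
    · refine le_csInf ⟨(K : ℝ), K.2, hlip f K hK⟩ ?_
      rintro C ⟨hC0, hC⟩
      apply csSup_le hne
      rintro r ⟨z, hz, rfl⟩
      exact hbd f C hC0 hC z hz
  · rintro g ⟨hg, ⟨C, hC⟩, hsym⟩
    have hgd : ∀ z ∈ B, DifferentiableAt ℂ g z := fun z hz =>
      hg.differentiableAt (hopen.mem_nhds hz)
    obtain ⟨f, hf⟩ : ∃ f : X → Y, ∀ a ∈ B, HasFDerivAt f (g a) a := by
      apply hconv.exists_forall_hasFDerivAt_of_fderiv_symmetric hopen
        (fun z hz => ((hgd z hz).restrictScalars ℝ).differentiableWithinAt)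
      intro z hz x y
      have e : ∀ v w, fderiv ℂ (fun u => g u v) z w = fderiv ℂ g z w v := by
        intro v w
        rw [fderiv_clm_apply (hgd z hz) (by fun_prop)]
        simp
      have h := hsym y x z hz
      rw [e, e] at h
      rw [(hgd z hz).fderiv_restrictScalars ℝ]
      exact h
    have hf' : ∀ a ∈ B, HasFDerivAt (fun u => f u - f 0) (g a) a := fun a ha =>
      (hf a ha).sub_const _
    refine ⟨fun u => f u - f 0, ⟨fun a ha => (hf' a ha).differentiableAt.differentiableWithinAt,
      sub_self _, C.toNNReal, ?_⟩, fun z hz => (hf' z hz).fderiv⟩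
    apply hconv.lipschitzOnWith_of_nnnorm_hasFDerivWithin_le (𝕜 := ℂ)
      (fun a ha => (hf' a ha).hasFDerivWithinAt)
    intro a ha
    rw [← NNReal.coe_le_coe]
    exact (hC a ha).trans (Real.le_coe_toNNReal C)
end
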